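/- arXiv:1009.4893 — 2 statements merged into one kernel-verified Lean document; each statement's English description precedes it below -/
import Mathlib

section
/- For every x in the group algebra Λπ, x·T = 0 if and only if x = y·N for some y ∈ Λπ; that is, the annihilator of T in Λπ is the principal ideal generated by N. (This is the exactness of the canonical complex W at the even-degree terms.) -/
/-!
The product `N * T` telescopes to `α ^ p - 1 = 0`, so every multiple of `N` is killed by `T`.
Conversely, `x * T = 0` says `x * α = x`: the coefficients of `x` are invariant under translation
by the generator, hence all equal to one constant `c`. Since every coefficient of `N` is `1`
(`coeff_norm`), this gives `x = c N`.
-/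

open MonoidAlgebra in
/-- All coefficients of the norm element are `1`: every element of the cyclic group is `j` times
the generator for exactly one `j < p`. -/
lemma coeff_norm (p : ℕ) [NeZero p] (g : Multiplicative (ZMod p)) :
    (∑ j ∈ Finset.range p, (MonoidAlgebra.of (ZMod p) (Multiplicative (ZMod p))
      (Multiplicative.ofAdd (1 : ZMod p))) ^ j).coeff g = 1 := by
  have h : ∀ j ∈ Finset.range p, ((MonoidAlgebra.of (ZMod p) (Multiplicative (ZMod p))
      (Multiplicative.ofAdd (1 : ZMod p))) ^ j).coeff g
      = if j = (Multiplicative.toAdd g).val then 1 else 0 := by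
    intro j hj
    rw [← map_pow, ← ofAdd_nsmul, nsmul_one, of_apply, coeff_single, Finsupp.single_apply]
    refine if_congr ⟨?_, ?_⟩ rfl rfl
    · rintro rfl
      rw [toAdd_ofAdd, ZMod.val_cast_of_lt (Finset.mem_range.1 hj)]
    · rintro rfl
      rw [ZMod.natCast_zmod_val, ofAdd_toAdd]
  rw [coeff_sum, Finset.sum_apply', Finset.sum_congr rfl h, Finset.sum_ite_eq',
    if_pos (Finset.mem_range.2 (ZMod.val_lt _))]

/-- In the group algebra `Λπ` of the cyclic group `π` of order `p` (with generator `α`)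
over `Λ = ℤ/p`, with `T = α - 1` and `N = 1 + α + ⋯ + α^(p-1)`: for every `x`,
`x * T = 0` iff `x = y * N` for some `y`; i.e. the annihilator of `T` is the
principal ideal generated by `N`. -/
theorem stmt3 (p : ℕ) (hp : p.Prime)
    (α : MonoidAlgebra (ZMod p) (Multiplicative (ZMod p)))
    (hα : α = MonoidAlgebra.of (ZMod p) (Multiplicative (ZMod p))
      (Multiplicative.ofAdd (1 : ZMod p)))
    (T N : MonoidAlgebra (ZMod p) (Multiplicative (ZMod p)))
    (hT : T = α - 1) (hN : N = ∑ j ∈ Finset.range p, α ^ j) :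
    ∀ x : MonoidAlgebra (ZMod p) (Multiplicative (ZMod p)),
      x * T = 0 ↔ ∃ y, x = y * N := by
  subst hα hT hN
  have : NeZero p := ⟨hp.ne_zero⟩
  intro x
  constructor
  · intro hx
    rw [mul_sub, mul_one, sub_eq_zero] at hx
    have step : ∀ a : ZMod p, x.coeff (Multiplicative.ofAdd (a + 1))
        = x.coeff (Multiplicative.ofAdd a) := by
      intro a
      conv_lhs => rw [← hx]
      rw [MonoidAlgebra.of_apply, MonoidAlgebra.coeff_mul_single_apply, mul_one, ← ofAdd_neg,
        ← ofAdd_add, add_neg_cancel_right]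
    have const : ∀ n : ℕ, x.coeff (Multiplicative.ofAdd (n : ZMod p)) = x.coeff 1 := by
      intro n
      induction n with
      | zero => simp
      | succ n ih => rw [Nat.cast_succ, step, ih]
    refine ⟨MonoidAlgebra.single 1 (x.coeff 1), ?_⟩
    ext g
    rw [MonoidAlgebra.coeff_single_mul_apply, coeff_norm, mul_one,
      ← const (Multiplicative.toAdd g).val, ZMod.natCast_zmod_val, ofAdd_toAdd]
  · rintro ⟨y, rfl⟩
    rw [mul_assoc, geom_sum_mul, ← map_pow, ← ofAdd_nsmul, nsmul_one, ZMod.natCast_self,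
      ofAdd_zero, map_one, sub_self, mul_zero]
end

section
/- The coproduct ψ is a chain map: for all n ≥ 1, d_{W⊗W} ∘ ψ_n = ψ_{n−1} ∘ d_W, where d_{W⊗W}(x ⊗ y) = dx ⊗ y + (−1)^i x ⊗ dy for x ∈ W_i. -/
/-!
With `A = α ⊗ 1` and `B = 1 ⊗ α` the claim is an identity in the commutative ring `Λπ ⊗ Λπ`, where
`A ^ p = B ^ p = 1`. Write `N_x = 1 + x + ⋯ + x ^ (p - 1)` and `S = ∑_{r < s < p} A ^ r B ^ s`.
The four parity classes of `(n, a)` give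

* `n` odd, `a` even: `(A - 1) B + (B - 1) = A B - 1`;
* `n` even, `a` even: `(A - 1) S + N_B = N_{AB}`;
* `n` even, `a` odd: `N_A - (B - 1) S = N_{AB} B`;
* `n` odd, `a` odd: `N_A - N_B B = (A B - 1) S`.

The second and third telescope in the sum over `r`, respectively `s`; they are proved for any upper
bound `q` in any commutative ring in `sub_one_mul_doubleSum_left` and `sub_one_mul_doubleSum_right`.
The fourth follows from these two by `A B - 1 = A (B - 1) + (A - 1)`, because `x N_x = N_x`
whenever `x ^ p = 1`.
-/

open TensorProduct

namespace Stmt8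

variable (p : ℕ)

/-- The group algebra `Λπ` of the cyclic group `π = ℤ/p` over `Λ = ℤ/p`. -/
abbrev GA := MonoidAlgebra (ZMod p) (Multiplicative (ZMod p))

/-- `R = Λπ ⊗_Λ Λπ`, the degreewise building block of `W ⊗ W`:  the component of
`(W ⊗ W)_n` in bidegree `(a, n - a)` is `W_a ⊗_Λ W_{n-a} ≅ Λπ ⊗_Λ Λπ` via the basis
`(e_a, e_{n-a})`. -/
abbrev R := TensorProduct (ZMod p) (GA p) (GA p)

/-- `A = α ⊗ 1`, the generator acting on the left tensor factor. -/
noncomputable def A : R p :=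
  (MonoidAlgebra.of (ZMod p) (Multiplicative (ZMod p)) (Multiplicative.ofAdd (1 : ZMod p))) ⊗ₜ 1

/-- `B = 1 ⊗ α`, the generator acting on the right tensor factor. -/
noncomputable def B : R p :=
  1 ⊗ₜ (MonoidAlgebra.of (ZMod p) (Multiplicative (ZMod p)) (Multiplicative.ofAdd (1 : ZMod p)))

/-- The differential coefficient acting on the left tensor factor:
`T ⊗ 1 = A - 1` in odd degrees, `N ⊗ 1 = Σ_j A^j` in even degrees. -/
noncomputable def cL (m : ℕ) : R p :=
  if Odd m then A p - 1 else ∑ j ∈ Finset.range p, (A p) ^ j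

/-- The differential coefficient acting on the right tensor factor:
`1 ⊗ T = B - 1` in odd degrees, `1 ⊗ N = Σ_j B^j` in even degrees. -/
noncomputable def cR (m : ℕ) : R p :=
  if Odd m then B p - 1 else ∑ j ∈ Finset.range p, (B p) ^ j

/-- The diagonal image of the differential coefficient of `W` in degree `n`
(`α` acts diagonally on `W ⊗ W`, i.e. as `A * B = α ⊗ α`): `Δ(T) = A*B - 1` in odd
degrees and `Δ(N) = Σ_j (A*B)^j` in even degrees. -/
noncomputable def cD (n : ℕ) : R p :=
  if Odd n then A p * B p - 1 else ∑ j ∈ Finset.range p, (A p * B p) ^ j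

/-- The component of `ψ(e_n)` lying in `W_a ⊗ W_{n-a}`, written in the basis
`(e_a, e_{n-a})`: from `ψ(e_{2i+1}) = Σ_{j+k=i} e_{2j} ⊗ e_{2k+1} + Σ_{j+k=i} e_{2j+1} ⊗ α e_{2k}`
and `ψ(e_{2i}) = Σ_{j+k=i} e_{2j} ⊗ e_{2k} + Σ_{j+k=i-1} Σ_{0 ≤ r < s < p} α^r e_{2j+1} ⊗ α^s e_{2k+1}`,
the component is `1 ⊗ 1` if `a` is even, `1 ⊗ α = B` if `a` is odd and `n` is odd, and
`Σ_{0 ≤ r < s < p} α^r ⊗ α^s = Σ_{r<s<p} A^r B^s` if `a` is odd and `n` is even. -/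
noncomputable def Ψ (n a : ℕ) : R p :=
  if Even a then 1
  else if Even n then ∑ s ∈ Finset.range p, ∑ r ∈ Finset.range s, (A p) ^ r * (B p) ^ s
  else B p

theorem sub_one_mul_doubleSum_left {K : Type*} [CommRing K] (x y : K) (q : ℕ) :
    (x - 1) * ∑ s ∈ Finset.range q, ∑ r ∈ Finset.range s, x ^ r * y ^ s
      = ∑ j ∈ Finset.range q, (x * y) ^ j - ∑ j ∈ Finset.range q, y ^ j := by
  induction q with
  | zero => simp
  | succ q ih =>
    simp only [Finset.sum_range_succ _ q, mul_add, ← Finset.sum_mul (Finset.range q)]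
    linear_combination ih + y ^ q * mul_geom_sum x q

theorem sub_one_mul_doubleSum_right {K : Type*} [CommRing K] (x y : K) (q : ℕ) :
    (y - 1) * ∑ s ∈ Finset.range q, ∑ r ∈ Finset.range s, x ^ r * y ^ s
      = y ^ q * ∑ j ∈ Finset.range q, x ^ j - y * ∑ j ∈ Finset.range q, (x * y) ^ j := by
  induction q with
  | zero => simp
  | succ q ih =>
    simp only [Finset.sum_range_succ _ q, mul_add, ← Finset.sum_mul (Finset.range q)]
    linear_combination ih

theorem alpha_pow :
    (MonoidAlgebra.of (ZMod p) (Multiplicative (ZMod p))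
      (Multiplicative.ofAdd (1 : ZMod p))) ^ p = 1 := by
  rw [← map_pow, ← ofAdd_nsmul]
  simp [MonoidAlgebra.one_def]

theorem A_pow : A p ^ p = 1 := by
  rw [A, Algebra.TensorProduct.tmul_pow, alpha_pow, one_pow, Algebra.TensorProduct.one_def]

theorem B_pow : B p ^ p = 1 := by
  rw [B, Algebra.TensorProduct.tmul_pow, alpha_pow, one_pow, Algebra.TensorProduct.one_def]

/-- `Even.neg_one_pow` does not unify here: negation on `R p` elaborates to the instance coming from
the tensor product of modules rather than to the one underlying its ring structure. -/
theorem neg_one_pow_of_even {a : ℕ} (ha : Even a) : (-1 : R p) ^ a = 1 := by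
  have h : (-1 : R p) ^ 2 = 1 := by ring
  obtain ⟨k, rfl⟩ := even_iff_exists_two_mul.mp ha
  rw [pow_mul, h, one_pow]

theorem neg_one_pow_of_odd {a : ℕ} (ha : Odd a) : (-1 : R p) ^ a = -1 := by
  obtain ⟨k, rfl⟩ := ha
  rw [pow_succ, neg_one_pow_of_even p (even_two_mul k), one_mul]

/-- The coproduct `ψ` of the canonical resolution `W` is a chain map:
`d_{W⊗W} ∘ ψ_n = ψ_{n-1} ∘ d_W` for all `n ≥ 1`, where
`d_{W⊗W}(x ⊗ y) = dx ⊗ y + (-1)^i x ⊗ dy` for `x ∈ W_i`.  Expressed on the free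
generator `e_n` and in the component of bidegree `(a, n - 1 - a)` (for each `0 ≤ a ≤ n-1`)
this is the identity below in `Λπ ⊗_Λ Λπ`. -/
theorem stmt8 (hp : p.Prime) (n a : ℕ) (hn : 1 ≤ n) (ha : a ≤ n - 1) :
    cL p (a + 1) * Ψ p n (a + 1) + (-1 : R p) ^ a * (cR p (n - a) * Ψ p n a)
      = cD p n * Ψ p (n - 1) a := by
  have hA := A_pow p
  have hB := B_pow p
  have hL := sub_one_mul_doubleSum_left (A p) (B p) p
  have hR := sub_one_mul_doubleSum_right (A p) (B p) p
  have gA := mul_geom_sum (A p) p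
  have gB := mul_geom_sum (B p) p
  have gAB := mul_geom_sum (A p * B p) p
  rw [mul_pow, hA, hB] at gAB
  rw [hA] at gA
  rw [hB] at gB hR
  have han : a ≤ n := by omega
  rcases Nat.even_or_odd n with en | on <;> rcases Nat.even_or_odd a with ea | oa
  · have h1 : ¬ Even (a + 1) := by grind
    have h2 : Odd (a + 1) := by grind
    have h3 : ¬ Odd (n - a) := by grind
    have h4 : ¬ Odd n := by grind
    have hs : (-1 : R p) ^ a = 1 := neg_one_pow_of_even p ea
    rw [hs]
    simp only [cL, cR, cD, Ψ, h1, h2, h3, h4, en, ea, if_true, if_false]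
    linear_combination hL
  · have h1 : Even (a + 1) := by grind
    have h2 : ¬ Odd (a + 1) := by grind
    have h3 : Odd (n - a) := by grind
    have h4 : ¬ Odd n := by grind
    have h5 : ¬ Even (n - 1) := by grind
    have h6 : ¬ Even a := by grind
    have hs : (-1 : R p) ^ a = -1 := neg_one_pow_of_odd p oa
    rw [hs]
    simp only [cL, cR, cD, Ψ, h1, h2, h3, h4, h5, h6, en, if_true, if_false]
    linear_combination -hR
  · have h1 : ¬ Even (a + 1) := by grind
    have h2 : Odd (a + 1) := by grind
    have h3 : Odd (n - a) := by grind
    have h4 : ¬ Even n := by grind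
    have hs : (-1 : R p) ^ a = 1 := neg_one_pow_of_even p ea
    rw [hs]
    simp only [cL, cR, cD, Ψ, h1, h2, h3, h4, on, ea, if_true, if_false]
    ring
  · have h1 : Even (a + 1) := by grind
    have h2 : ¬ Odd (a + 1) := by grind
    have h3 : ¬ Odd (n - a) := by grind
    have h4 : ¬ Even n := by grind
    have h5 : Even (n - 1) := by grind
    have h6 : ¬ Even a := by grind
    have hs : (-1 : R p) ^ a = -1 := neg_one_pow_of_odd p oa
    rw [hs]
    simp only [cL, cR, cD, Ψ, h1, h2, h3, h4, h5, h6, on, if_true, if_false]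
    -- `A B - 1 = A (B - 1) + (A - 1)`, with `x N_x = N_x` for `x = A, B, A B`
    linear_combination -(A p) * hR - hL - gA - gB + gAB

end Stmt8
end
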